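/- Main lemma (probabilistic part): fix an integer k ≥ 1 and a real ε with 0 < ε < k/2. For every δ > 0 there exists σ_0 such that for all σ ≥ σ_0 and every uniformly avoiding source μ on alphabet Fin σ, setting n = ⌊(σ-k)^{k/2-ε}⌋, the probability that some k-tuple occurs twice among the first n emitted characters — i.e., that there exist indices 0 ≤ i < j ≤ n - k with W_i = W_j — is less than δ. (In particular, with high probability as σ → ∞, the source does not emit duplicate k-tuples among its first (σ-k)^{k/2-ε} characters.) -/

import Mathlib

open MeasureTheory ProbabilityTheory
open scoped Classical ENNReal

noncomputable section

/-- The `k`-window at position `i` of an infinite string `ω : ℕ → Fin σ`. -/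
def Window {σ : ℕ} (k i : ℕ) (ω : ℕ → Fin σ) : Fin k → Fin σ :=
  fun t => ω (i + t)

/-- A *uniformly avoiding source*: a probability measure `μ` on `ℕ → Fin σ`
(with the product σ-algebra) such that (i) almost surely the first `k`
coordinates are pairwise distinct, and (ii) conditioned on any positive-probability
history of length `n ≥ k` whose last `k` entries are pairwise distinct, the next
character is uniform on the `σ - k` characters not among the last `k` entries. -/
def UniformlyAvoiding {σ : ℕ} (k : ℕ) (μ : Measure (ℕ → Fin σ)) : Prop :=
  IsProbabilityMeasure μ ∧
  (∀ᵐ ω ∂μ, ∀ i j : ℕ, i < k → j < k → i ≠ j → ω i ≠ ω j) ∧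
  ∀ n : ℕ, k ≤ n → ∀ a : ℕ → Fin σ,
    μ {ω | ∀ t < n, ω t = a t} ≠ 0 →
    (∀ p q : ℕ, n - k ≤ p → p < n → n - k ≤ q → q < n → p ≠ q → a p ≠ a q) →
    ∀ b : Fin σ,
      (μ[|{ω | ∀ t < n, ω t = a t}]) {ω | ω n = b} =
        if ∃ t : ℕ, n - k ≤ t ∧ t < n ∧ a t = b then 0
        else 1 / ((σ - k : ℕ) : ℝ≥0∞)

/-- The length `⌊(σ-k)^(k/2-ε)⌋` from the main lemma. -/
def sampleLength (k : ℕ) (ε : ℝ) (σ : ℕ) : ℕ :=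
  ⌊((σ - k : ℕ) : ℝ) ^ ((k : ℝ) / 2 - ε)⌋₊

/-- The last `k` entries before position `n` are pairwise distinct. -/
def DistLast {σ : ℕ} (k n : ℕ) (a : ℕ → Fin σ) : Prop :=
  ∀ p q : ℕ, n - k ≤ p → p < n → n - k ≤ q → q < n → p ≠ q → a p ≠ a q

lemma measurableSet_cyl {σ : ℕ} (n : ℕ) (a : ℕ → Fin σ) :
    MeasurableSet {ω : ℕ → Fin σ | ∀ t < n, ω t = a t} := by
  have : {ω : ℕ → Fin σ | ∀ t < n, ω t = a t} =
      ⋂ t : ℕ, ⋂ _ : t < n, (fun ω : ℕ → Fin σ => ω t) ⁻¹' {a t} := by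
    ext ω; simp
  rw [this]
  exact MeasurableSet.iInter fun t => MeasurableSet.iInter fun _ =>
    measurable_pi_apply t (measurableSet_singleton _)

lemma step_bound {σ : ℕ} (k n : ℕ) (hσ : 0 < σ) (μ : Measure (ℕ → Fin σ))
    [IsProbabilityMeasure μ]
    (hD : ∀ᵐ ω ∂μ, DistLast k n ω) (S : Set (ℕ → Fin σ))
    (hS : ∀ ω ω' : ℕ → Fin σ, (∀ t < n, ω t = ω' t) → ω ∈ S → ω' ∈ S)
    (f : (ℕ → Fin σ) → Fin σ)
    (hf : ∀ ω ω' : ℕ → Fin σ, (∀ t < n, ω t = ω' t) → f ω = f ω')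
    (c : ℝ≥0∞)
    (hc : ∀ a : ℕ → Fin σ, DistLast k n a → μ {ω | ∀ t < n, ω t = a t} ≠ 0 →
      (μ[|{ω | ∀ t < n, ω t = a t}]) {ω | ω n = f a} ≤ c) :
    μ (S ∩ {ω | ω n = f ω}) ≤ c * μ S := by
  let ext : (Fin n → Fin σ) → ℕ → Fin σ := fun h t => if ht : t < n then h ⟨t, ht⟩ else ⟨0, hσ⟩
  let r : (ℕ → Fin σ) → (Fin n → Fin σ) := fun ω t => ω t
  have hr : ∀ h, r ⁻¹' {h} = {ω | ∀ t < n, ω t = ext h t} := by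
    intro h
    ext ω
    simp only [Set.mem_preimage, Set.mem_singleton_iff, Set.mem_setOf_eq, r, ext]
    constructor
    · rintro rfl t ht
      simp [ht]
    · intro H
      funext t
      have := H t t.2
      simpa using this
  have hrm : ∀ h, MeasurableSet (r ⁻¹' {h}) := fun h => by
    rw [hr]; exact measurableSet_cyl n _
  have hsum : ∀ A : Set (ℕ → Fin σ), μ A = ∑ h, μ (r ⁻¹' {h} ∩ A) := by
    intro A
    have := sum_measure_preimage_singleton (μ := μ.restrict A) (f := r) Finset.univ
      (fun y _ => hrm y)
    simp only [Finset.coe_univ, Set.preimage_univ, Measure.restrict_apply_univ] at this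
    rw [← this]
    exact Finset.sum_congr rfl fun h _ => Measure.restrict_apply (hrm h)
  rw [hsum (S ∩ _), hsum S, Finset.mul_sum]
  refine Finset.sum_le_sum fun h _ => ?_
  rw [hr]
  set a := ext h with ha
  set C : Set (ℕ → Fin σ) := {ω | ∀ t < n, ω t = a t} with hC
  by_cases h0 : μ C = 0
  · rw [measure_mono_null (Set.inter_subset_left) h0]; exact zero_le
  have hDa : DistLast k n a := by
    by_contra hcon
    apply h0
    refine measure_mono_null ?_ (ae_iff.1 hD)
    intro ω hω hd
    apply hcon
    intro p q hp hp' hq hq' hpq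
    rw [← hω p hp', ← hω q hq']
    exact hd p q hp hp' hq hq' hpq
  by_cases haS : a ∈ S
  · have h1 : C ∩ S = C := Set.inter_eq_left.2 fun ω hω =>
      hS a ω (fun t ht => (hω t ht).symm) haS
    have h2 : C ∩ (S ∩ {ω | ω n = f ω}) ⊆ C ∩ {ω | ω n = f a} := by
      rintro ω ⟨hω, -, hω2⟩
      refine ⟨hω, ?_⟩
      change ω n = f a
      rw [← hf ω a hω]; exact hω2
    rw [h1]
    refine (measure_mono h2).trans ?_
    have h3 := hc a hDa h0
    rw [cond_apply (measurableSet_cyl n a)] at h3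
    rw [← hC] at h3
    calc μ (C ∩ {ω | ω n = f a}) = μ C * ((μ C)⁻¹ * μ (C ∩ {ω | ω n = f a})) := by
          rw [← mul_assoc, ENNReal.mul_inv_cancel h0 (measure_ne_top _ _), one_mul]
      _ ≤ μ C * c := by gcongr
      _ = c * μ C := mul_comm _ _
  · have : C ∩ (S ∩ {ω | ω n = f ω}) = ∅ := by
      ext ω
      simp only [Set.mem_inter_iff, Set.mem_empty_iff_false, iff_false]
      rintro ⟨hω, hωS, -⟩
      exact haS (hS ω a hω hωS)
    rw [this]; simp

lemma ae_dist {σ : ℕ} (k : ℕ) (hσ : 0 < σ) (μ : Measure (ℕ → Fin σ))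
    (h : UniformlyAvoiding k μ) (n : ℕ) (hn : k ≤ n) :
    ∀ᵐ ω ∂μ, DistLast k n ω := by
  obtain ⟨hp, h1, h2⟩ := h
  induction n, hn using Nat.le_induction with
  | base =>
    filter_upwards [h1] with ω hω p q _ hp _ hq hpq
    exact hω p q hp hq hpq
  | succ n hn ih =>
    have key : ∀ t : ℕ, ∀ᵐ ω ∂μ, n - k ≤ t → t < n → ω n ≠ ω t := by
      intro t
      by_cases ht : n - k ≤ t ∧ t < n
      · have := step_bound k n hσ μ ih Set.univ (fun _ _ _ _ => trivial) (fun ω => ω t)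
          (fun ω ω' hh => hh t ht.2) 0 (by
            intro a ha h0
            rw [h2 n hn a h0 ha (a t), if_pos ⟨t, ht.1, ht.2, rfl⟩])
        rw [ae_iff]
        refine measure_mono_null ?_ (le_antisymm (by simpa using this) zero_le)
        intro ω hω
        simp only [Set.mem_setOf_eq] at hω
        push Not at hω
        exact hω.2.2
      · exact Filter.Eventually.of_forall fun ω a b => absurd ⟨a, b⟩ ht
    filter_upwards [ih, ae_all_iff.2 key] with ω hω hk p q hp hp' hq hq' hpq
    rcases Nat.lt_succ_iff_lt_or_eq.1 hp' with hpn | rfl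
    · rcases Nat.lt_succ_iff_lt_or_eq.1 hq' with hqn | rfl
      · exact hω p q (by omega) hpn (by omega) hqn hpq
      · exact (hk p (by omega) hpn).symm
    · exact hk q (by omega) (by omega)

lemma pair_bound {σ : ℕ} (k : ℕ) (hk : 1 ≤ k) (hσ : k < σ) (μ : Measure (ℕ → Fin σ))
    (h : UniformlyAvoiding k μ) (i j : ℕ) (hij : i < j) :
    μ {ω | Window k i ω = Window k j ω} ≤ (1 / ((σ - k : ℕ) : ℝ≥0∞)) ^ k := by
  have hd := ae_dist k (by omega) μ h
  obtain ⟨hp, h1, h2⟩ := h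
  by_cases hj : j < k
  · have : μ {ω | Window k i ω = Window k j ω} = 0 := by
      refine measure_mono_null ?_ (ae_iff.1 h1)
      intro ω hω hd
      have := congrFun hω ⟨0, hk⟩
      exact hd i j (by omega) hj (by omega) (by simpa [Window] using this)
    rw [this]; exact zero_le
  have main : ∀ t : ℕ, μ {ω | ∀ s < t, ω (j + s) = ω (i + s)} ≤
      (1 / ((σ - k : ℕ) : ℝ≥0∞)) ^ t := by
    intro t
    induction t with
    | zero => simp
    | succ t ih =>
      have hn : k ≤ j + t := by omega
      have := step_bound k (j + t) (by omega) μ (hd _ hn)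
        {ω | ∀ s < t, ω (j + s) = ω (i + s)}
        (by
          intro ω ω' hh hω s hs
          rw [← hh _ (by omega), ← hh _ (by omega)]
          exact hω s hs)
        (fun ω => ω (i + t)) (fun ω ω' hh => hh _ (by omega)) (1 / ((σ - k : ℕ) : ℝ≥0∞))
        (by
          intro a ha h0
          rw [h2 _ hn a h0 ha (a (i + t))]
          split_ifs
          · exact zero_le
          · exact le_rfl)
      rw [pow_succ']
      refine le_trans (measure_mono ?_) (this.trans (by gcongr))
      intro ω hω
      exact ⟨fun s hs => hω s (by omega), hω t (by omega)⟩
  refine le_trans (measure_mono ?_) (main k)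
  intro ω hω s hs
  exact (congrFun hω ⟨s, hs⟩).symm

lemma union_bound {σ : ℕ} (k : ℕ) (hk : 1 ≤ k) (hσ : k < σ) (μ : Measure (ℕ → Fin σ))
    (h : UniformlyAvoiding k μ) (n : ℕ) :
    μ {ω | ∃ i j : ℕ, i < j ∧ j ≤ n - k ∧ Window k i ω = Window k j ω} ≤
      ENNReal.ofReal ((n : ℝ) ^ 2 / ((σ - k : ℕ) : ℝ) ^ k) := by
  have hm : (0 : ℝ) < ((σ - k : ℕ) : ℝ) := by
    have : 0 < σ - k := by omega
    exact_mod_cast this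
  let P := (Finset.range n ×ˢ Finset.range n).filter fun p : ℕ × ℕ => p.1 < p.2
  have hsub : {ω : ℕ → Fin σ | ∃ i j : ℕ, i < j ∧ j ≤ n - k ∧ Window k i ω = Window k j ω} ⊆
      ⋃ p ∈ P, {ω | Window k p.1 ω = Window k p.2 ω} := by
    rintro ω ⟨i, j, hij, hj, hw⟩
    simp only [Set.mem_iUnion]
    refine ⟨(i, j), ?_, hw⟩
    simp only [P, Finset.mem_filter, Finset.mem_product, Finset.mem_range]
    omega
  have hcard : P.card ≤ n ^ 2 := by
    refine (Finset.card_filter_le _ _).trans ?_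
    simp [sq]
  calc _ ≤ ∑ p ∈ P, μ {ω | Window k p.1 ω = Window k p.2 ω} :=
        (measure_mono hsub).trans (measure_biUnion_finset_le _ _)
    _ ≤ ∑ p ∈ P, (1 / ((σ - k : ℕ) : ℝ≥0∞)) ^ k := by
        refine Finset.sum_le_sum fun p hp => pair_bound k hk hσ μ h _ _ ?_
        exact (Finset.mem_filter.1 hp).2
    _ = (P.card : ℝ≥0∞) * (1 / ((σ - k : ℕ) : ℝ≥0∞)) ^ k := by simp
    _ ≤ ((n ^ 2 : ℕ) : ℝ≥0∞) * (1 / ((σ - k : ℕ) : ℝ≥0∞)) ^ k := by gcongr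
    _ = ENNReal.ofReal ((n : ℝ) ^ 2 / ((σ - k : ℕ) : ℝ) ^ k) := by
        rw [ENNReal.ofReal_div_of_pos (by positivity), ENNReal.ofReal_pow (by positivity),
          ENNReal.ofReal_pow (by positivity), ENNReal.ofReal_natCast, ENNReal.ofReal_natCast,
          one_div, ← ENNReal.inv_pow, ENNReal.div_eq_inv_mul, mul_comm]
        push_cast; rfl

/-- Main lemma (probabilistic part): for `k ≥ 1` and `0 < ε < k/2`, for every `δ > 0`
there is `σ₀` such that for all `σ ≥ σ₀` and every uniformly avoiding source `μ` on
`Fin σ`, with `n = ⌊(σ-k)^(k/2-ε)⌋`, the probability that some `k`-tuple occurs twice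
among the first `n` emitted characters is less than `δ`. -/
theorem no_duplicates_whp (k : ℕ) (hk : 1 ≤ k) (ε : ℝ) (hε0 : 0 < ε)
    (hε : ε < (k : ℝ) / 2) (δ : ℝ) (hδ : 0 < δ) :
    ∃ σ₀ : ℕ, ∀ σ : ℕ, σ₀ ≤ σ → k < σ →
      ∀ μ : Measure (ℕ → Fin σ), UniformlyAvoiding k μ →
        μ {ω | ∃ i j : ℕ, i < j ∧ j ≤ sampleLength k ε σ - k ∧
            Window k i ω = Window k j ω} < ENNReal.ofReal δ := by
  have hlim : Filter.Tendsto (fun σ : ℕ => ((σ - k : ℕ) : ℝ) ^ (-(2 * ε))) Filter.atTop (nhds 0) :=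
    (tendsto_rpow_neg_atTop (by positivity)).comp
      (tendsto_natCast_atTop_atTop.comp (Filter.tendsto_sub_atTop_nat k))
  obtain ⟨σ₀, hσ₀⟩ := Filter.eventually_atTop.1 (hlim.eventually (gt_mem_nhds hδ))
  refine ⟨σ₀, fun σ hσ hkσ μ hμ => ?_⟩
  refine (union_bound k hk hkσ μ hμ _).trans_lt ?_
  rw [ENNReal.ofReal_lt_ofReal_iff hδ]
  refine lt_of_le_of_lt ?_ (hσ₀ σ hσ)
  have hm : (0 : ℝ) < ((σ - k : ℕ) : ℝ) := by
    have : 0 < σ - k := by omega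
    exact_mod_cast this
  have hn : (sampleLength k ε σ : ℝ) ≤ ((σ - k : ℕ) : ℝ) ^ ((k : ℝ) / 2 - ε) :=
    Nat.floor_le (by positivity)
  rw [div_le_iff₀ (by positivity)]
  calc (sampleLength k ε σ : ℝ) ^ 2 ≤ (((σ - k : ℕ) : ℝ) ^ ((k : ℝ) / 2 - ε)) ^ 2 := by gcongr
    _ = ((σ - k : ℕ) : ℝ) ^ (-(2 * ε)) * ((σ - k : ℕ) : ℝ) ^ k := by
      rw [← Real.rpow_natCast _ k, ← Real.rpow_add hm, ← Real.rpow_natCast _ 2,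
        ← Real.rpow_mul hm.le]
      congr 1
      push_cast
      ring
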